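/- Let i ∈ {1,2} and let n ≥ 56. If the statements T(n, 96; t(n−24), t(n−24), 0) and T(n−24, t(n−24); s_i(n−48), 0, 0) are true, then the statement T(n, t(n); s_i(n−24), 0, 0) is true. -/

import Mathlib

open MvPolynomial

/-- The linear form associated with a coefficient vector `v ∈ ℂ^{n+1}`. -/
noncomputable def lin {n : ℕ} (v : Fin (n + 1) → ℂ) : MvPolynomial (Fin (n + 1)) ℂ :=
  ∑ j, MvPolynomial.C (v j) * MvPolynomial.X j

/-- The subspace `f·U = {f·u : u ∈ U}` of the polynomial ring, where `U` is the
space of linear forms. -/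
noncomputable def mulU {n : ℕ} (f : MvPolynomial (Fin (n + 1)) ℂ) :
    Submodule ℂ (MvPolynomial (Fin (n + 1)) ℂ) :=
  Submodule.span ℂ (Set.range fun j : Fin (n + 1) => f * MvPolynomial.X j)

/-- The affine cone `ℓ^{d-1}·U + ℓ^{d-2}·m·U` over the tangent space to the tangential
variety `T_{n,d}` of the `d`-th Veronese variety at the point `[ℓ^{d-1} m]`. -/
noncomputable def tanCone {n : ℕ} (d : ℕ) (ℓ m : Fin (n + 1) → ℂ) :
    Submodule ℂ (MvPolynomial (Fin (n + 1)) ℂ) :=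
  mulU (lin ℓ ^ (d - 1)) ⊔ mulU (lin ℓ ^ (d - 2) * lin m)

/-- `v ∈ U_{i+1}`, i.e. the coordinates of `v` indexed by `{24i, …, 24i+23}` vanish. -/
def memU {n : ℕ} (i : Fin 3) (v : Fin (n + 1) → ℂ) : Prop :=
  ∀ j : Fin (n + 1), 24 * (i : ℕ) ≤ (j : ℕ) → (j : ℕ) < 24 * (i : ℕ) + 24 → v j = 0

/-- `S_3(U_{i+1})`: the span of all products of three linear forms belonging to `U_{i+1}`. -/
noncomputable def S3U {n : ℕ} (i : Fin 3) : Submodule ℂ (MvPolynomial (Fin (n + 1)) ℂ) :=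
  Submodule.span ℂ
    {p | ∃ a b c : Fin (n + 1) → ℂ,
      memU i a ∧ memU i b ∧ memU i c ∧ p = lin a * lin b * lin c}

/-- `v ∈ U_K`, the span of the variables `x_0, …, x_71`. -/
def memK {n : ℕ} (v : Fin (n + 1) → ℂ) : Prop :=
  ∀ j : Fin (n + 1), 72 ≤ (j : ℕ) → v j = 0

/-- `S_3(U_K)`: the span of all products of three linear forms in `x_0, …, x_71`. -/
noncomputable def S3K (n : ℕ) : Submodule ℂ (MvPolynomial (Fin (n + 1)) ℂ) :=
  Submodule.span ℂ
    {p | ∃ a b c : Fin (n + 1) → ℂ,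
      memK a ∧ memK b ∧ memK c ∧ p = lin a * lin b * lin c}

/-- The alternating sum `Σ_{j=1}^k (−1)^{j−1} C(k,j) · C(n−24j+3, 3)` (with the convention
`C(m,3) = 0` for `m < 3`, realized by truncated subtraction `n+3−24j`). -/
def altsum (n k : ℕ) : ℤ :=
  ∑ j ∈ Finset.Icc 1 k, (-1 : ℤ) ^ (j - 1) * (k.choose j : ℤ) * ((n + 3 - 24 * j).choose 3 : ℤ)

/-- `k = #{i : a_i ≠ 0}`. -/
def kcount (a : Fin 3 → ℕ) : ℕ := (Finset.univ.filter fun i => a i ≠ 0).card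

/-- The expected dimension `w(n, s; a_1, a_2, a_3)`, as an integer. -/
def expdimZ (n s : ℕ) (a : Fin 3 → ℕ) : ℤ :=
  min (altsum n (kcount a) + 48 * ((a 0 + a 1 + a 2 : ℕ) : ℤ) + (2 * n + 1) * s)
    (((n + 3).choose 3 : ℤ))

/-- The subspace `W(n, s; a_1, a_2, a_3)` determined by the given points. -/
noncomputable def Wspace {n s : ℕ} {a : Fin 3 → ℕ}
    (ℓ m : Fin s → Fin (n + 1) → ℂ)
    (ℓ' m' : (i : Fin 3) → Fin (a i) → Fin (n + 1) → ℂ) :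
    Submodule ℂ (MvPolynomial (Fin (n + 1)) ℂ) :=
  (⨆ i : {i : Fin 3 // a i ≠ 0},
      (S3U i.1 ⊔ ⨆ j : Fin (a i.1), tanCone 3 (ℓ' i.1 j) (m' i.1 j)))
    ⊔ ⨆ i : Fin s, tanCone 3 (ℓ i) (m i)

/-- The statement `T(n, s; a_1, a_2, a_3)`: some choice of points realizes the expected
dimension `w(n, s; a_1, a_2, a_3)`. -/
def TStmt (n s : ℕ) (a : Fin 3 → ℕ) : Prop :=
  ∃ (ℓ m : Fin s → Fin (n + 1) → ℂ)
    (ℓ' m' : (i : Fin 3) → Fin (a i) → Fin (n + 1) → ℂ),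
    (∀ (i : Fin 3) (j : Fin (a i)), memU i (ℓ' i j) ∧ memU i (m' i j)) ∧
    (Module.finrank ℂ (Wspace ℓ m ℓ' m') : ℤ) = expdimZ n s a

/-- `s_1(n) = 48k² + (11+4r)k + ⌊(4r²+22r+33)/48⌋` where `n = 24k + r`. -/
def s1 (n : ℕ) : ℕ :=
  48 * (n / 24) ^ 2 + (11 + 4 * (n % 24)) * (n / 24) +
    (4 * (n % 24) ^ 2 + 22 * (n % 24) + 33) / 48

/-- `s_2(n) = s_1(n) + 1`. -/
def s2 (n : ℕ) : ℕ := s1 n + 1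

/-- `t(n) = 4n − 37`. -/
def tfun (n : ℕ) : ℕ := 4 * n - 37

/-- The expected codimension `c(n)` of `W(n, t(n); s_1(n−24), 0, 0)`. -/
def cInt (n : ℕ) : ℤ :=
  ((n + 3).choose 3 : ℤ) - ((n - 21).choose 3 : ℤ) - (tfun n : ℤ) * (2 * n + 1) -
    48 * (s1 (n - 24) : ℤ)

/-! ### Polynomial families of subspaces and semicontinuity of the dimension -/

/-- The family `F z` of subspaces is spanned by polynomials whose coefficients depend
polynomially on `z`. -/
def PolyFam {σ : Type} (F : ℂ → Submodule ℂ (MvPolynomial σ ℂ)) : Prop :=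
  ∃ S : Set (MvPolynomial σ (Polynomial ℂ)), ∀ z : ℂ,
    F z = Submodule.span ℂ ((MvPolynomial.map (Polynomial.evalRingHom z)) '' S)

theorem PolyFam.sup {σ : Type} {F G : ℂ → Submodule ℂ (MvPolynomial σ ℂ)}
    (hF : PolyFam F) (hG : PolyFam G) : PolyFam (fun z => F z ⊔ G z) := by
  obtain ⟨S, hS⟩ := hF
  obtain ⟨T, hT⟩ := hG
  exact ⟨S ∪ T, fun z => by simp only [Set.image_union, Submodule.span_union, hS, hT]⟩

theorem PolyFam.iSup {σ : Type} {ι : Type} {F : ι → ℂ → Submodule ℂ (MvPolynomial σ ℂ)}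
    (hF : ∀ i, PolyFam (F i)) : PolyFam (fun z => ⨆ i, F i z) := by
  choose S hS using hF
  exact ⟨⋃ i, S i, fun z => by rw [Set.image_iUnion, Submodule.span_iUnion]; simp only [hS]⟩

theorem PolyFam.const {σ : Type} (P : Submodule ℂ (MvPolynomial σ ℂ)) :
    PolyFam (fun _ => P) := by
  refine ⟨(MvPolynomial.map Polynomial.C) '' (P : Set (MvPolynomial σ ℂ)), fun z => ?_⟩
  rw [Set.image_image]
  have : (Polynomial.evalRingHom z).comp Polynomial.C = RingHom.id ℂ := by ext; simp
  simp only [MvPolynomial.map_map, this, MvPolynomial.map_id, Set.image_id',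
    Submodule.span_eq]

/-- Applying a linear functional to a polynomial family gives a polynomial. -/
theorem functional_poly {σ : Type} (f : MvPolynomial σ ℂ →ₗ[ℂ] ℂ)
    (G : MvPolynomial σ (Polynomial ℂ)) :
    ∃ p : Polynomial ℂ, ∀ z, f (MvPolynomial.map (Polynomial.evalRingHom z) G) = p.eval z := by
  induction G using MvPolynomial.induction_on' with
  | monomial u a =>
    refine ⟨Polynomial.C (f (MvPolynomial.monomial u 1)) * a, fun z => ?_⟩
    have : MvPolynomial.monomial u (a.eval z) = (a.eval z) • MvPolynomial.monomial u (1 : ℂ) := by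
      simp [MvPolynomial.smul_monomial]
    simp only [MvPolynomial.map_monomial, Polynomial.coe_evalRingHom, this, map_smul]
    simp [mul_comm]
  | add p q hp hq =>
    obtain ⟨a, ha⟩ := hp
    obtain ⟨b, hb⟩ := hq
    exact ⟨a + b, fun z => by simp [ha, hb]⟩

/-- The dimension in a polynomial family drops only at finitely many parameters. -/
theorem PolyFam.semicont {σ : Type} {F : ℂ → Submodule ℂ (MvPolynomial σ ℂ)}
    (hF : PolyFam F) (hfin : ∀ z, FiniteDimensional ℂ (F z)) (z₀ : ℂ) :
    {z | Module.finrank ℂ (F z) < Module.finrank ℂ (F z₀)}.Finite := by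
  obtain ⟨S, hS⟩ := hF
  let v : ℂ → S → MvPolynomial σ ℂ := fun z g => MvPolynomial.map (Polynomial.evalRingHom z) g.1
  have hv : ∀ z, F z = Submodule.span ℂ (Set.range (v z)) := by
    intro z; rw [hS, Set.image_eq_range]
  obtain ⟨κ, a, -, hspan, hli⟩ := exists_linearIndependent' ℂ (v z₀)
  have hmem : ∀ z k, v z (a k) ∈ F z := fun z k => by
    rw [hv]; exact Submodule.subset_span ⟨_, rfl⟩
  have hli' : LinearIndependent ℂ (fun k => (⟨v z₀ (a k), hmem z₀ k⟩ : F z₀)) :=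
    LinearIndependent.of_comp (F z₀).subtype hli
  have : FiniteDimensional ℂ (F z₀) := hfin z₀
  have : Finite κ := hli'.finite
  have : Fintype κ := Fintype.ofFinite κ
  classical
  have hcard : Module.finrank ℂ (F z₀) = Fintype.card κ := by
    rw [hv, ← hspan]; exact finrank_span_eq_card hli
  obtain ⟨L, hL⟩ := LinearMap.exists_leftInverse_of_injective
    (Finsupp.linearCombination ℂ (v z₀ ∘ a))
    (LinearMap.ker_eq_bot.2 (linearIndependent_iff_injective_finsuppLinearCombination.1 hli))
  have hLv : ∀ k, L (v z₀ (a k)) = Finsupp.single k 1 := fun k => by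
    have := LinearMap.congr_fun hL (Finsupp.single k 1)
    simpa using this
  choose p hp using fun (j k : κ) => functional_poly ((Finsupp.lapply k).comp L) (a j).1
  let M : Matrix κ κ (Polynomial ℂ) := Matrix.of p
  have hM : ∀ z, M.det.eval z = (Matrix.of fun j k => L (v z (a j)) k).det := by
    intro z
    have := RingHom.map_det (Polynomial.evalRingHom z) M
    simp only [Polynomial.coe_evalRingHom] at this
    rw [this]
    congr 1
    ext j k
    simp [M, ← hp, v]
  have hne : M.det ≠ 0 := by
    intro h
    have h1 := hM z₀
    have h2 : (Matrix.of fun j k => L (v z₀ (a j)) k) = (1 : Matrix κ κ ℂ) := by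
      ext j k
      simp [hLv, Finsupp.single_apply, Matrix.one_apply]
    rw [h, h2] at h1
    simp at h1
  refine (Polynomial.finite_setOfPred_isRoot hne).subset ?_
  intro z hz
  by_contra hroot
  have hdet : (Matrix.of fun j k => L (v z (a j)) k).det ≠ 0 := by
    rw [← hM]; exact hroot
  have h3 := Matrix.linearIndependent_rows_of_det_ne_zero hdet
  have h4 : LinearIndependent ℂ (fun k => (⟨v z (a k), hmem z k⟩ : F z)) := by
    refine LinearIndependent.of_comp
      ((Finsupp.linearEquivFunOnFinite ℂ ℂ κ).toLinearMap ∘ₗ L ∘ₗ (F z).subtype) ?_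
    exact h3
  have : FiniteDimensional ℂ (F z) := hfin z
  have h5 := h4.fintype_card_le_finrank
  have hz' : Module.finrank ℂ (F z) < Module.finrank ℂ (F z₀) := hz
  omega

/-- The linear form on the line through `v` and `w` is a polynomial family. -/
theorem lin_line {n : ℕ} (v w : Fin (n + 1) → ℂ) :
    ∃ G : MvPolynomial (Fin (n + 1)) (Polynomial ℂ), ∀ z : ℂ,
      lin (v + z • (w - v)) = MvPolynomial.map (Polynomial.evalRingHom z) G := by
  refine ⟨∑ j, MvPolynomial.C (Polynomial.C (v j) + Polynomial.X * Polynomial.C (w j - v j))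
    * MvPolynomial.X j, fun z => ?_⟩
  simp [lin]

theorem PolyFam.mulU_fam {n : ℕ} {f : ℂ → MvPolynomial (Fin (n + 1)) ℂ}
    (hf : ∃ G : MvPolynomial (Fin (n + 1)) (Polynomial ℂ), ∀ z : ℂ,
      f z = MvPolynomial.map (Polynomial.evalRingHom z) G) :
    PolyFam (fun z => mulU (f z)) := by
  obtain ⟨G, hG⟩ := hf
  refine ⟨Set.range fun j => G * MvPolynomial.X j, fun z => ?_⟩
  simp only [← Set.range_comp, mulU]
  congr 2
  ext j
  simp [hG]

theorem PolyFam.tanCone_line {n : ℕ} (v w v' w' : Fin (n + 1) → ℂ) :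
    PolyFam (fun z : ℂ => tanCone 3 (v + z • (w - v)) (v' + z • (w' - v'))) := by
  obtain ⟨G, hG⟩ := lin_line v w
  obtain ⟨G', hG'⟩ := lin_line v' w'
  refine PolyFam.sup (PolyFam.mulU_fam ⟨G ^ 2, fun z => ?_⟩) (PolyFam.mulU_fam ⟨G * G', fun z => ?_⟩)
  · simp [hG]
  · simp [hG, hG']

/-! ### Dimension bounds -/

/-- The span of all cubic monomials in the variables `x_{f 0}, x_{f 1}, …`. -/
noncomputable def cub {n m : ℕ} (f : Fin m → Fin (n + 1)) :
    Submodule ℂ (MvPolynomial (Fin (n + 1)) ℂ) :=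
  Submodule.span ℂ (Set.range fun s : Sym (Fin m) 3 =>
    ((s : Multiset (Fin m)).map fun i => (MvPolynomial.X (f i) : MvPolynomial (Fin (n + 1)) ℂ)).prod)

theorem cub_fin {n m : ℕ} (f : Fin m → Fin (n + 1)) : FiniteDimensional ℂ (cub f) := by
  unfold cub
  exact FiniteDimensional.span_of_finite ℂ (Set.finite_range _)

theorem cub_finrank {n m : ℕ} (f : Fin m → Fin (n + 1)) :
    Module.finrank ℂ (cub f) ≤ (m + 2).choose 3 := by
  have h := finrank_range_le_card (R := ℂ) (fun s : Sym (Fin m) 3 =>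
    ((s : Multiset (Fin m)).map fun i =>
      (MvPolynomial.X (f i) : MvPolynomial (Fin (n + 1)) ℂ)).prod)
  rw [Sym.card_sym_eq_choose, Fintype.card_fin] at h
  exact h

theorem lin_mem_span {n m : ℕ} (f : Fin m → Fin (n + 1)) (a : Fin (n + 1) → ℂ)
    (ha : ∀ j, j ∉ Set.range f → a j = 0) :
    lin a ∈ Submodule.span ℂ
      (Set.range fun i => (MvPolynomial.X (f i) : MvPolynomial (Fin (n + 1)) ℂ)) := by
  refine Submodule.sum_mem _ fun j _ => ?_
  by_cases hj : j ∈ Set.range f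
  · obtain ⟨i, rfl⟩ := hj
    rw [← MvPolynomial.smul_eq_C_mul]
    exact Submodule.smul_mem _ _ (Submodule.subset_span ⟨i, rfl⟩)
  · simp [ha j hj]

theorem lin3_mem_cub {n m : ℕ} (f : Fin m → Fin (n + 1)) (a b c : Fin (n + 1) → ℂ)
    (ha : ∀ j, j ∉ Set.range f → a j = 0) (hb : ∀ j, j ∉ Set.range f → b j = 0)
    (hc : ∀ j, j ∉ Set.range f → c j = 0) : lin a * lin b * lin c ∈ cub f := by
  have h := Submodule.mul_mem_mul (Submodule.mul_mem_mul (lin_mem_span f a ha)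
    (lin_mem_span f b hb)) (lin_mem_span f c hc)
  rw [Submodule.span_mul_span, Submodule.span_mul_span] at h
  refine Submodule.span_mono ?_ h
  rintro _ ⟨_, ⟨_, ⟨i, rfl⟩, _, ⟨j, rfl⟩, rfl⟩, _, ⟨k, rfl⟩, rfl⟩
  refine ⟨⟨{i, j, k}, rfl⟩, ?_⟩
  simp [mul_assoc]

theorem lin_single {n : ℕ} (j : Fin (n + 1)) : lin (Pi.single j 1) = MvPolynomial.X j := by
  classical
  unfold lin
  rw [Finset.sum_eq_single j]
  · simp
  · intro b _ hb; simp [Pi.single_eq_of_ne hb]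
  · simp

theorem mul_lin_mem_mulU {n : ℕ} (f : MvPolynomial (Fin (n + 1)) ℂ) (a : Fin (n + 1) → ℂ) :
    f * lin a ∈ mulU f := by
  unfold lin
  rw [Finset.mul_sum]
  refine Submodule.sum_mem _ fun j _ => ?_
  rw [mul_left_comm, ← MvPolynomial.smul_eq_C_mul]
  exact Submodule.smul_mem _ _ (Submodule.subset_span ⟨j, rfl⟩)

/-- The span of all products of three linear forms. -/
noncomputable def A3 (n : ℕ) : Submodule ℂ (MvPolynomial (Fin (n + 1)) ℂ) :=
  Submodule.span ℂ {p | ∃ a b c : Fin (n + 1) → ℂ, p = lin a * lin b * lin c}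

theorem A3_le (n : ℕ) : A3 n ≤ cub (id : Fin (n + 1) → Fin (n + 1)) := by
  refine Submodule.span_le.2 ?_
  rintro _ ⟨a, b, c, rfl⟩
  exact lin3_mem_cub _ a b c (by simp) (by simp) (by simp)

theorem A3_fin (n : ℕ) : FiniteDimensional ℂ (A3 n) :=
  have := cub_fin (id : Fin (n + 1) → Fin (n + 1))
  Submodule.finiteDimensional_of_le (A3_le n)

theorem A3_finrank (n : ℕ) : Module.finrank ℂ (A3 n) ≤ (n + 3).choose 3 := by
  have := cub_fin (id : Fin (n + 1) → Fin (n + 1))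
  exact (Submodule.finrank_mono (A3_le n)).trans (cub_finrank _)

theorem S3U_le_A3 {n : ℕ} (i : Fin 3) : (S3U i : Submodule ℂ (MvPolynomial (Fin (n + 1)) ℂ)) ≤ A3 n := by
  refine Submodule.span_mono ?_
  rintro _ ⟨a, b, c, -, -, -, rfl⟩
  exact ⟨a, b, c, rfl⟩

theorem tanCone_le {n : ℕ} (ℓ m : Fin (n + 1) → ℂ) (P : Submodule ℂ (MvPolynomial (Fin (n + 1)) ℂ))
    (h1 : ∀ j, lin ℓ * lin ℓ * MvPolynomial.X j ∈ P)
    (h2 : ∀ j, lin ℓ * lin m * MvPolynomial.X j ∈ P) : tanCone 3 ℓ m ≤ P := by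
  refine sup_le (Submodule.span_le.2 ?_) (Submodule.span_le.2 ?_)
  · rintro _ ⟨j, rfl⟩
    simpa [pow_two] using h1 j
  · rintro _ ⟨j, rfl⟩
    simpa using h2 j

theorem tanCone_le_A3 {n : ℕ} (ℓ m : Fin (n + 1) → ℂ) : tanCone 3 ℓ m ≤ A3 n := by
  refine tanCone_le ℓ m _ (fun j => ?_) (fun j => ?_) <;> rw [← lin_single] <;>
    exact Submodule.subset_span ⟨_, _, _, rfl⟩

theorem finrank_iSup_le' {E : Type} [AddCommGroup E] [Module ℂ E] (s d : ℕ)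
    (F : Fin s → Submodule ℂ E) (hf : ∀ i, FiniteDimensional ℂ (F i))
    (hF : ∀ i, Module.finrank ℂ (F i) ≤ d) :
    Module.finrank ℂ (⨆ i, F i : Submodule ℂ E) ≤ d * s := by
  induction s with
  | zero => simp
  | succ s ih =>
    have hle : (⨆ i, F i) ≤ F 0 ⊔ ⨆ i : Fin s, F i.succ := by
      refine iSup_le fun i => ?_
      refine Fin.cases le_sup_left (fun j => ?_) i
      exact (le_iSup (fun i : Fin s => F i.succ) j).trans le_sup_right
    have h0 := hf 0
    have h1 := fun i : Fin s => hf i.succ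
    have := Submodule.finrank_add_le_finrank_add_finrank (F 0) (⨆ i : Fin s, F i.succ)
    have h2 := ih (fun i => F i.succ) h1 (fun i => hF _)
    have h3 := hF 0
    have h4 := Submodule.finrank_mono hle
    rw [mul_add]
    omega

theorem mulU_fin {n : ℕ} (f : MvPolynomial (Fin (n + 1)) ℂ) : FiniteDimensional ℂ (mulU f) :=
  FiniteDimensional.span_of_finite ℂ (Set.finite_range _)

theorem mulU_finrank {n : ℕ} (f : MvPolynomial (Fin (n + 1)) ℂ) :
    Module.finrank ℂ (mulU f) ≤ n + 1 := by
  have h := finrank_range_le_card (R := ℂ) (fun j : Fin (n + 1) => f * MvPolynomial.X j)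
  rwa [Fintype.card_fin] at h

theorem mulU_zero {n : ℕ} : mulU (0 : MvPolynomial (Fin (n + 1)) ℂ) = ⊥ := by
  simp [mulU]

theorem tanCone_fin {n : ℕ} (ℓ m : Fin (n + 1) → ℂ) : FiniteDimensional ℂ (tanCone 3 ℓ m) :=
  have := A3_fin n
  Submodule.finiteDimensional_of_le (tanCone_le_A3 ℓ m)

theorem tanCone_finrank {n : ℕ} (ℓ m : Fin (n + 1) → ℂ) :
    Module.finrank ℂ (tanCone 3 ℓ m) ≤ 2 * n + 1 := by
  have f1 := mulU_fin (lin ℓ ^ (3 - 1))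
  have f2 := mulU_fin (lin ℓ ^ (3 - 2) * lin m)
  have r1 := mulU_finrank (lin ℓ ^ (3 - 1))
  have r2 := mulU_finrank (lin ℓ ^ (3 - 2) * lin m)
  by_cases hz : lin ℓ ^ (3 - 1) * lin m = 0
  · have hz' : lin ℓ ^ (3 - 2) * lin m = 0 := by
      simp at hz ⊢
      exact hz
    rw [tanCone, hz', mulU_zero, sup_bot_eq]
    omega
  · have h := Submodule.finrank_sup_add_finrank_inf_eq (mulU (lin ℓ ^ (3 - 1)))
      (mulU (lin ℓ ^ (3 - 2) * lin m))
    have hpos : 0 < Module.finrank ℂ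
        (mulU (lin ℓ ^ (3 - 1)) ⊓ mulU (lin ℓ ^ (3 - 2) * lin m) :
          Submodule ℂ (MvPolynomial (Fin (n + 1)) ℂ)) := by
      have hne : (mulU (lin ℓ ^ (3 - 1)) ⊓ mulU (lin ℓ ^ (3 - 2) * lin m) :
          Submodule ℂ (MvPolynomial (Fin (n + 1)) ℂ)) ≠ ⊥ := by
        refine (Submodule.ne_bot_iff _).2 ⟨_, ⟨mul_lin_mem_mulU _ m, ?_⟩, hz⟩
        have := mul_lin_mem_mulU (lin ℓ ^ (3 - 2) * lin m) ℓ
        have e : lin ℓ ^ (3 - 1) * lin m = lin ℓ ^ (3 - 2) * lin m * lin ℓ := by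
          simp; ring
        rw [e]; exact this
      rw [Nat.pos_iff_ne_zero]
      intro h0
      exact hne (Submodule.finrank_eq_zero.1 h0)
    unfold tanCone
    omega

/-- The part of the tangent cone in the directions `x_0, …, x_23`. -/
noncomputable def smallCone {n : ℕ} (ℓ m : Fin (n + 1) → ℂ) :
    Submodule ℂ (MvPolynomial (Fin (n + 1)) ℂ) :=
  Submodule.span ℂ (Set.range fun p : Fin 24 ⊕ Fin 24 =>
    Sum.elim (fun j : Fin 24 => lin ℓ * lin ℓ * MvPolynomial.X (Fin.ofNat (n + 1) j))
      (fun j : Fin 24 => lin ℓ * lin m * MvPolynomial.X (Fin.ofNat (n + 1) j)) p)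

theorem smallCone_fin {n : ℕ} (ℓ m : Fin (n + 1) → ℂ) : FiniteDimensional ℂ (smallCone ℓ m) :=
  FiniteDimensional.span_of_finite ℂ (Set.finite_range _)

theorem smallCone_finrank {n : ℕ} (ℓ m : Fin (n + 1) → ℂ) :
    Module.finrank ℂ (smallCone ℓ m) ≤ 48 := by
  have h := finrank_range_le_card (R := ℂ) (fun p : Fin 24 ⊕ Fin 24 =>
    Sum.elim (fun j : Fin 24 => lin ℓ * lin ℓ * MvPolynomial.X (Fin.ofNat (n + 1) j))
      (fun j : Fin 24 => lin ℓ * lin m * MvPolynomial.X (Fin.ofNat (n + 1) j)) p)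
  exact h.trans (by simp)

theorem tanCone_le_small {n : ℕ} (ℓ m : Fin (n + 1) → ℂ) (hl : memU 0 ℓ) (hm : memU 0 m) :
    tanCone 3 ℓ m ≤ S3U 0 ⊔ smallCone ℓ m := by
  have hX : ∀ j : Fin (n + 1), ¬ (j : ℕ) < 24 → memU 0 (Pi.single j (1 : ℂ) : Fin (n + 1) → ℂ) := by
    intro j hj i _ hi
    refine Pi.single_eq_of_ne ?_ _
    rintro rfl
    simp at hi
    omega
  refine tanCone_le ℓ m _ (fun j => ?_) (fun j => ?_)
  · by_cases hj : (j : ℕ) < 24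
    · refine Submodule.mem_sup_right (Submodule.subset_span ⟨Sum.inl ⟨j, hj⟩, ?_⟩)
      simp
    · refine Submodule.mem_sup_left (Submodule.subset_span ⟨_, _, _, hl, hl, hX j hj, ?_⟩)
      rw [lin_single]
  · by_cases hj : (j : ℕ) < 24
    · refine Submodule.mem_sup_right (Submodule.subset_span ⟨Sum.inr ⟨j, hj⟩, ?_⟩)
      simp
    · refine Submodule.mem_sup_left (Submodule.subset_span ⟨_, _, _, hl, hm, hX j hj, ?_⟩)
      rw [lin_single]

/-- The injection of the index set of `n-24` onto the indices of `U_2`. -/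
def emb (k : ℕ) (i : Fin (k + 1)) : Fin (k + 24 + 1) :=
  ⟨if (i : ℕ) < 24 then i else i + 24, by split <;> omega⟩

theorem emb_inj (k : ℕ) : Function.Injective (emb k) := by
  intro i j h
  simp only [emb, Fin.mk.injEq] at h
  ext
  split_ifs at h <;> omega

theorem S3U_le_cub {n m : ℕ} (i : Fin 3) (f : Fin m → Fin (n + 1))
    (hf : ∀ j : Fin (n + 1), j ∉ Set.range f → 24 * (i : ℕ) ≤ j ∧ (j : ℕ) < 24 * (i : ℕ) + 24) :
    S3U i ≤ cub f := by
  refine Submodule.span_le.2 ?_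
  rintro _ ⟨a, b, c, ha, hb, hc, rfl⟩
  exact lin3_mem_cub f a b c (fun j hj => ha j (hf j hj).1 (hf j hj).2)
    (fun j hj => hb j (hf j hj).1 (hf j hj).2) (fun j hj => hc j (hf j hj).1 (hf j hj).2)

theorem S3U_fin {n : ℕ} (i : Fin 3) :
    FiniteDimensional ℂ (S3U i : Submodule ℂ (MvPolynomial (Fin (n + 1)) ℂ)) :=
  have := A3_fin n
  Submodule.finiteDimensional_of_le (S3U_le_A3 i)

theorem S3U0_finrank (k : ℕ) :
    Module.finrank ℂ (S3U 0 : Submodule ℂ (MvPolynomial (Fin (k + 24 + 1)) ℂ)) ≤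
      (k + 3).choose 3 := by
  let f : Fin (k + 1) → Fin (k + 24 + 1) := fun i => ⟨i + 24, by omega⟩
  have := cub_fin f
  refine (Submodule.finrank_mono (S3U_le_cub 0 f ?_)).trans (cub_finrank f)
  intro j hj
  by_contra h
  refine hj ⟨⟨j - 24, by omega⟩, ?_⟩
  ext
  simp at h
  simp [f]
  omega

theorem not_range_emb (k : ℕ) (hk : 24 ≤ k) (j : Fin (k + 24 + 1)) :
    j ∉ Set.range (emb k) ↔ 24 ≤ (j : ℕ) ∧ (j : ℕ) < 48 := by
  constructor
  · intro hj
    by_contra h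
    refine hj ⟨⟨if (j : ℕ) < 24 then j else j - 24, by split <;> omega⟩, ?_⟩
    ext
    simp only [emb]
    split_ifs <;> omega
  · rintro ⟨h1, h2⟩ ⟨i, rfl⟩
    simp only [emb] at h1 h2
    split_ifs at h1 h2 <;> omega

theorem S3U1_finrank (k : ℕ) (hk : 24 ≤ k) :
    Module.finrank ℂ (S3U 1 : Submodule ℂ (MvPolynomial (Fin (k + 24 + 1)) ℂ)) ≤
      (k + 3).choose 3 := by
  have := cub_fin (emb k)
  refine (Submodule.finrank_mono (S3U_le_cub 1 (emb k) ?_)).trans (cub_finrank (emb k))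
  intro j hj
  simpa using (not_range_emb k hk j).1 hj

/-! ### The embedding of the polynomial ring in fewer variables -/

/-- Extension of a coefficient vector by zero. -/
noncomputable def ext0 {k : ℕ} (v : Fin (k + 1) → ℂ) : Fin (k + 24 + 1) → ℂ :=
  Function.extend (emb k) v (fun _ => 0)

theorem ext0_emb {k : ℕ} (v : Fin (k + 1) → ℂ) (i : Fin (k + 1)) : ext0 v (emb k i) = v i :=
  (emb_inj k).extend_apply v _ i

theorem ext0_not {k : ℕ} (v : Fin (k + 1) → ℂ) (j : Fin (k + 24 + 1)) (hj : j ∉ Set.range (emb k)) :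
    ext0 v j = 0 :=
  Function.extend_apply' v _ j hj

theorem ext0_line {k : ℕ} (v w : Fin (k + 1) → ℂ) (z : ℂ) :
    ext0 (v + z • (w - v)) = ext0 v + z • (ext0 w - ext0 v) := by
  ext j
  by_cases hj : j ∈ Set.range (emb k)
  · obtain ⟨i, rfl⟩ := hj
    simp [ext0_emb]
  · simp [ext0_not _ j hj]

theorem ext0_restrict {k : ℕ} (hk : 24 ≤ k) (v : Fin (k + 24 + 1) → ℂ) (hv : memU 1 v) :
    ext0 (v ∘ emb k) = v := by
  ext j
  by_cases hj : j ∈ Set.range (emb k)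
  · obtain ⟨i, rfl⟩ := hj
    simp [ext0_emb]
  · rw [ext0_not _ j hj]
    have := (not_range_emb k hk j).1 hj
    exact (hv j (by simpa using this.1) (by simpa using this.2)).symm

theorem memU1_ext0 {k : ℕ} (hk : 24 ≤ k) (v : Fin (k + 1) → ℂ) : memU 1 (ext0 v) := by
  intro j h1 h2
  exact ext0_not v j ((not_range_emb k hk j).2 ⟨by simpa using h1, by simpa using h2⟩)

theorem memU0_ext0 {k : ℕ} (v : Fin (k + 1) → ℂ) (hv : memU 0 v) : memU 0 (ext0 v) := by
  intro j _ h2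
  by_cases hj : j ∈ Set.range (emb k)
  · obtain ⟨i, rfl⟩ := hj
    rw [ext0_emb]
    refine hv i (by simp) ?_
    simp only [emb] at h2
    split_ifs at h2 with h
    · simpa using h
    · simp at h2
  · exact ext0_not _ j hj

theorem rename_lin {k : ℕ} (v : Fin (k + 1) → ℂ) :
    MvPolynomial.rename (emb k) (lin v) = lin (ext0 v) := by
  unfold lin
  rw [map_sum]
  refine Fintype.sum_of_injective (emb k) (emb_inj k) _ _ ?_ ?_
  · intro j hj
    simp [ext0_not _ j hj]
  · intro i
    simp [ext0_emb]

/-- The renaming map as a linear map. -/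
noncomputable def phi (k : ℕ) :
    MvPolynomial (Fin (k + 1)) ℂ →ₗ[ℂ] MvPolynomial (Fin (k + 24 + 1)) ℂ :=
  (MvPolynomial.rename (emb k)).toLinearMap

theorem phi_inj (k : ℕ) : Function.Injective (phi k) :=
  MvPolynomial.rename_injective _ (emb_inj k)

theorem phi_A3 {k : ℕ} (hk : 24 ≤ k) : (A3 k).map (phi k) ≤ S3U 1 := by
  rw [Submodule.map_le_iff_le_comap, A3, Submodule.span_le]
  rintro _ ⟨a, b, c, rfl⟩
  refine Submodule.subset_span ⟨_, _, _, memU1_ext0 hk a, memU1_ext0 hk b, memU1_ext0 hk c, ?_⟩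
  simp [phi, rename_lin]

theorem phi_S3U {k : ℕ} :
    (S3U 0 : Submodule ℂ (MvPolynomial (Fin (k + 1)) ℂ)).map (phi k) ≤ S3U 0 := by
  rw [Submodule.map_le_iff_le_comap, S3U, Submodule.span_le]
  rintro _ ⟨a, b, c, ha, hb, hc, rfl⟩
  refine Submodule.subset_span ⟨_, _, _, memU0_ext0 a ha, memU0_ext0 b hb, memU0_ext0 c hc, ?_⟩
  simp [phi, rename_lin]

theorem phi_tanCone {k : ℕ} (ℓ m : Fin (k + 1) → ℂ) :
    (tanCone 3 ℓ m).map (phi k) ≤ tanCone 3 (ext0 ℓ) (ext0 m) := by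
  rw [Submodule.map_le_iff_le_comap]
  refine tanCone_le ℓ m _ (fun j => ?_) (fun j => ?_)
  · refine Submodule.mem_sup_left (Submodule.subset_span ⟨emb k j, ?_⟩)
    simp [phi, rename_lin, pow_two]
  · refine Submodule.mem_sup_right (Submodule.subset_span ⟨emb k j, ?_⟩)
    simp [phi, rename_lin]

/-! ### The spaces occurring in the statements -/

/-- The space `W(n, s; a, 0, 0)`. -/
noncomputable def W1 {n s a : ℕ} (ℓ m : Fin s → Fin (n + 1) → ℂ)
    (ℓ' m' : Fin a → Fin (n + 1) → ℂ) : Submodule ℂ (MvPolynomial (Fin (n + 1)) ℂ) :=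
  (S3U 0 ⊔ ⨆ j, tanCone 3 (ℓ' j) (m' j)) ⊔ ⨆ i, tanCone 3 (ℓ i) (m i)

/-- The space `W(n, s; a, b, 0)`. -/
noncomputable def W2 {n s a b : ℕ} (ℓ m : Fin s → Fin (n + 1) → ℂ)
    (ℓ' m' : Fin a → Fin (n + 1) → ℂ) (p q : Fin b → Fin (n + 1) → ℂ) :
    Submodule ℂ (MvPolynomial (Fin (n + 1)) ℂ) :=
  ((S3U 0 ⊔ ⨆ j, tanCone 3 (ℓ' j) (m' j)) ⊔ (S3U 1 ⊔ ⨆ j, tanCone 3 (p j) (q j)))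
    ⊔ ⨆ i, tanCone 3 (ℓ i) (m i)

theorem W1_le_A3 {n s a : ℕ} (ℓ m : Fin s → Fin (n + 1) → ℂ)
    (ℓ' m' : Fin a → Fin (n + 1) → ℂ) : W1 ℓ m ℓ' m' ≤ A3 n :=
  sup_le (sup_le (S3U_le_A3 0) (iSup_le fun _ => tanCone_le_A3 _ _))
    (iSup_le fun _ => tanCone_le_A3 _ _)

theorem W2_le_A3 {n s a b : ℕ} (ℓ m : Fin s → Fin (n + 1) → ℂ)
    (ℓ' m' : Fin a → Fin (n + 1) → ℂ) (p q : Fin b → Fin (n + 1) → ℂ) :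
    W2 ℓ m ℓ' m' p q ≤ A3 n :=
  sup_le (sup_le (sup_le (S3U_le_A3 0) (iSup_le fun _ => tanCone_le_A3 _ _))
    (sup_le (S3U_le_A3 1) (iSup_le fun _ => tanCone_le_A3 _ _)))
    (iSup_le fun _ => tanCone_le_A3 _ _)

theorem W1_upper {k s a : ℕ} (ℓ m : Fin s → Fin (k + 24 + 1) → ℂ)
    (ℓ' m' : Fin a → Fin (k + 24 + 1) → ℂ) (h : ∀ j, memU 0 (ℓ' j) ∧ memU 0 (m' j)) :
    Module.finrank ℂ (W1 ℓ m ℓ' m') ≤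
      (k + 3).choose 3 + 48 * a + (2 * (k + 24) + 1) * s := by
  have hle : W1 ℓ m ℓ' m' ≤
      (S3U 0 ⊔ ⨆ j, smallCone (ℓ' j) (m' j)) ⊔ ⨆ i, tanCone 3 (ℓ i) (m i) := by
    refine sup_le_sup_right (sup_le le_sup_left (iSup_le fun j => ?_)) _
    refine (tanCone_le_small _ _ (h j).1 (h j).2).trans (sup_le_sup_left ?_ _)
    exact le_iSup (fun j => smallCone (ℓ' j) (m' j)) j
  have i0 : FiniteDimensional ℂ (S3U 0 : Submodule ℂ (MvPolynomial (Fin (k + 24 + 1)) ℂ)) :=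
    S3U_fin 0
  have i1 : ∀ j, FiniteDimensional ℂ (smallCone (ℓ' j) (m' j)) := fun j => smallCone_fin _ _
  have i2 : ∀ j, FiniteDimensional ℂ (tanCone 3 (ℓ j) (m j)) := fun j => tanCone_fin _ _
  have e1 := Submodule.finrank_mono hle
  have e2 := Submodule.finrank_add_le_finrank_add_finrank
    (S3U 0 ⊔ ⨆ j, smallCone (ℓ' j) (m' j)) (⨆ i, tanCone 3 (ℓ i) (m i))
  have e3 := Submodule.finrank_add_le_finrank_add_finrank
    (S3U 0) (⨆ j, smallCone (ℓ' j) (m' j))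
  have e4 := S3U0_finrank k
  have e5 := finrank_iSup_le' a 48 _ i1 (fun j => smallCone_finrank _ _)
  have e6 := finrank_iSup_le' s (2 * (k + 24) + 1) _ i2 (fun j => tanCone_finrank _ _)
  omega

theorem expdim1 (k s a : ℕ) (ha : a ≠ 0) :
    expdimZ (k + 24) s ![a, 0, 0] =
      ((min ((k + 3).choose 3 + 48 * a + (2 * (k + 24) + 1) * s) ((k + 24 + 3).choose 3) : ℕ) : ℤ) := by
  have hk : kcount ![a, 0, 0] = 1 := by
    simp [kcount, Finset.filter, Fin.univ_succ, ha]
  have h2 : k + 24 + 3 - 24 * 1 = k + 3 := by omega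
  have h3 : (![a, 0, 0] : Fin 3 → ℕ) 0 + (![a, 0, 0] : Fin 3 → ℕ) 1 + (![a, 0, 0] : Fin 3 → ℕ) 2
    = a := rfl
  rw [expdimZ, hk, altsum, Finset.Icc_self, Finset.sum_singleton, h2, h3]
  generalize (k + 3).choose 3 = A
  generalize (k + 24 + 3).choose 3 = B
  simp

theorem expdim2 (k s a b : ℕ) (ha : a ≠ 0) (hb : b ≠ 0) :
    expdimZ (k + 24 + 24) s ![a, b, 0] =
      min (2 * ((k + 24 + 3).choose 3 : ℤ) - ((k + 3).choose 3 : ℤ) + 48 * ((a : ℤ) + b)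
        + (2 * (k + 24 + 24) + 1) * s) ((k + 24 + 24 + 3).choose 3 : ℤ) := by
  have hk : kcount ![a, b, 0] = 2 := by
    simp [kcount, Finset.filter, Fin.univ_succ, ha, hb]
  have h1 : k + 24 + 24 + 3 - 24 * 1 = k + 24 + 3 := by omega
  have h2 : k + 24 + 24 + 3 - 24 * 2 = k + 3 := by omega
  have h3 : Finset.Icc 1 2 = {1, 2} := by decide
  have h4 : (![a, b, 0] : Fin 3 → ℕ) 0 + (![a, b, 0] : Fin 3 → ℕ) 1 + (![a, b, 0] : Fin 3 → ℕ) 2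
    = a + b := rfl
  rw [expdimZ, hk, altsum, h3, Finset.sum_pair (by norm_num), h1, h2, h4]
  generalize (k + 3).choose 3 = A
  generalize (k + 24 + 3).choose 3 = B
  generalize (k + 24 + 24 + 3).choose 3 = D
  congr 1
  push_cast
  norm_num
  ring

theorem T1_intro (k s a : ℕ) (ha : a ≠ 0) (ℓ m : Fin s → Fin (k + 24 + 1) → ℂ)
    (ℓ' m' : Fin a → Fin (k + 24 + 1) → ℂ) (h : ∀ j, memU 0 (ℓ' j) ∧ memU 0 (m' j))
    (hr : min ((k + 3).choose 3 + 48 * a + (2 * (k + 24) + 1) * s) ((k + 24 + 3).choose 3) ≤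
      Module.finrank ℂ (W1 ℓ m ℓ' m')) : TStmt (k + 24) s ![a, 0, 0] := by
  let e : (Fin a → Fin (k + 24 + 1) → ℂ) →
      (i : Fin 3) → Fin ((![a, 0, 0] : Fin 3 → ℕ) i) → Fin (k + 24 + 1) → ℂ :=
    fun f i => Fin.cases (motive := fun i : Fin 3 =>
      Fin ((![a, 0, 0] : Fin 3 → ℕ) i) → Fin (k + 24 + 1) → ℂ) f (fun _ _ => 0) i
  refine ⟨ℓ, m, e ℓ', e m', ?_, ?_⟩
  · intro i
    refine Fin.cases ?_ ?_ i
    · exact h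
    · intro i j
      exact ⟨fun _ _ _ => rfl, fun _ _ _ => rfl⟩
  · have hW : Wspace ℓ m (e ℓ') (e m') = W1 ℓ m ℓ' m' := by
      unfold Wspace W1
      congr 1
      apply le_antisymm
      · refine iSup_le ?_
        rintro ⟨i, hi⟩
        fin_cases i
        · exact le_rfl
        · exact absurd rfl hi
        · exact absurd rfl hi
      · exact le_iSup (fun i : {i : Fin 3 // (![a, 0, 0] : Fin 3 → ℕ) i ≠ 0} =>
          (S3U i.1 ⊔ ⨆ j : Fin ((![a, 0, 0] : Fin 3 → ℕ) i.1),
            tanCone 3 (e ℓ' i.1 j) (e m' i.1 j))) ⟨0, ha⟩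
    rw [hW, expdim1 k s a ha]
    norm_cast
    refine le_antisymm (le_min (W1_upper ℓ m ℓ' m' h) ?_) hr
    have := A3_fin (k + 24)
    exact (Submodule.finrank_mono (W1_le_A3 _ _ _ _)).trans (A3_finrank _)

theorem T1_elim (k s a : ℕ) (ha : a ≠ 0) (hT : TStmt (k + 24) s ![a, 0, 0]) :
    ∃ (ℓ m : Fin s → Fin (k + 24 + 1) → ℂ) (ℓ' m' : Fin a → Fin (k + 24 + 1) → ℂ),
      (∀ j, memU 0 (ℓ' j) ∧ memU 0 (m' j)) ∧
      min ((k + 3).choose 3 + 48 * a + (2 * (k + 24) + 1) * s) ((k + 24 + 3).choose 3) ≤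
      Module.finrank ℂ (W1 ℓ m ℓ' m') := by
  obtain ⟨ℓ, m, ℓ', m', h, hr⟩ := hT
  refine ⟨ℓ, m, ℓ' 0, m' 0, h 0, ?_⟩
  rw [expdim1 k s a ha] at hr
  rw [← Nat.cast_injective hr]
  have := A3_fin (k + 24)
  have : FiniteDimensional ℂ (W1 (a := a) ℓ m (ℓ' 0) (m' 0)) :=
    Submodule.finiteDimensional_of_le (W1_le_A3 _ _ _ _)
  refine Submodule.finrank_mono (sup_le_sup_right (iSup_le ?_) _)
  rintro ⟨i, hi⟩
  fin_cases i
  · exact le_rfl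
  · exact absurd rfl hi
  · exact absurd rfl hi

theorem T2_elim (k s a b : ℕ) (ha : a ≠ 0) (hb : b ≠ 0) (hT : TStmt (k + 24 + 24) s ![a, b, 0]) :
    ∃ (ℓ m : Fin s → Fin (k + 24 + 24 + 1) → ℂ) (ℓ' m' : Fin a → Fin (k + 24 + 24 + 1) → ℂ)
      (p q : Fin b → Fin (k + 24 + 24 + 1) → ℂ),
      (∀ j, memU 0 (ℓ' j) ∧ memU 0 (m' j)) ∧ (∀ j, memU 1 (p j) ∧ memU 1 (q j)) ∧
      min (2 * ((k + 24 + 3).choose 3 : ℤ) - ((k + 3).choose 3 : ℤ) + 48 * ((a : ℤ) + b)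
        + (2 * (k + 24 + 24) + 1) * s) ((k + 24 + 24 + 3).choose 3 : ℤ) ≤
      Module.finrank ℂ (W2 ℓ m ℓ' m' p q) := by
  obtain ⟨ℓ, m, ℓ', m', h, hr⟩ := hT
  refine ⟨ℓ, m, ℓ' 0, m' 0, ℓ' 1, m' 1, h 0, h 1, ?_⟩
  rw [← expdim2 k s a b ha hb, ← hr]
  have := A3_fin (k + 24 + 24)
  have : FiniteDimensional ℂ (W2 (a := a) (b := b) ℓ m (ℓ' 0) (m' 0) (ℓ' 1) (m' 1)) :=
    Submodule.finiteDimensional_of_le (W2_le_A3 _ _ _ _ _ _)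
  norm_cast
  refine Submodule.finrank_mono (sup_le_sup_right (iSup_le ?_) _)
  rintro ⟨i, hi⟩
  fin_cases i
  · exact le_sup_left
  · exact le_sup_right
  · exact absurd rfl hi

/-! ### Numerical identities -/

theorem choose3 (m : ℕ) : (6 : ℤ) * ((m + 3).choose 3 : ℤ) = (m + 3) * (m + 2) * (m + 1) := by
  have h := Nat.descFactorial_eq_factorial_mul_choose (m + 3) 3
  simp [Nat.descFactorial, Nat.factorial] at h
  have h' : (((m + 1) * ((m + 2) * (m + 3)) : ℕ) : ℤ) = ((6 * (m + 3).choose 3 : ℕ) : ℤ) := by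
    rw [← h]
  push_cast at h'
  linarith

theorem saturation (k t : ℕ) (ht : (t : ℤ) = 4 * (k + 24) - 37) :
    2 * ((k + 24 + 3).choose 3 : ℤ) - ((k + 3).choose 3 : ℤ) + 48 * ((t : ℤ) + t)
        + (2 * (k + 24 + 24) + 1) * (96 : ℕ) = ((k + 24 + 24 + 3).choose 3 : ℤ) := by
  have h1 := choose3 k
  have h2 := choose3 (k + 24)
  have h3 := choose3 (k + 24 + 24)
  rw [ht]
  push_cast at h1 h2 h3 ⊢
  nlinarith

theorem s1_step (k : ℕ) : s1 (k + 24) = tfun (k + 24) + s1 k := by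
  have h1 : (k + 24) / 24 = k / 24 + 1 := by omega
  have h2 : (k + 24) % 24 = k % 24 := by omega
  have h3 : tfun (k + 24) = 96 * (k / 24) + 59 + 4 * (k % 24) := by
    unfold tfun; omega
  rw [h3, s1, s1, h1, h2]
  ring

theorem s1_pos (k : ℕ) (hk : 8 ≤ k) : s1 k ≠ 0 := by
  unfold s1
  by_cases h : k / 24 = 0
  · have h2 : 8 ≤ k % 24 := by omega
    have : 1 ≤ (4 * (k % 24) ^ 2 + 22 * (k % 24) + 33) / 48 := by
      rw [Nat.le_div_iff_mul_le (by norm_num)]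
      nlinarith
    omega
  · have : 0 < 48 * (k / 24) ^ 2 := by positivity
    omega

theorem final_arith (k t b A B D w1 w2 f1 f2 sv iv v s : ℕ)
    (c5 : 2 * (B : ℤ) - (A : ℤ) + 48 * ((t : ℤ) + t) + (2 * (k + 24 + 24) + 1) * (96 : ℕ) = (D : ℤ))
    (hr2 : min (A + 48 * b + (2 * (k + 24) + 1) * t) B ≤ w1) (hr1 : D ≤ w2)
    (hz1 : w2 ≤ f1) (hz2 : w1 ≤ f2) (c1 : f1 ≤ sv) (c2 : f2 ≤ iv) (c3 : sv + iv = v + s)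
    (c4 : s ≤ B) :
    min (B + 48 * (t + b) + (2 * (k + 24 + 24) + 1) * (96 + t)) D ≤ v := by
  have m1 : (2 * (k + 24 + 24) + 1) * (96 + t) =
      (2 * (k + 24 + 24) + 1) * 96 + ((2 * (k + 24) + 1) * t + 48 * t) := by ring
  rw [m1]
  push_cast at c5
  generalize (2 * (k + 24) + 1) * t = T at *
  omega

/-! ### The specialization argument -/

theorem main_step (k t b : ℕ) (hb : b ≠ 0) (ht0 : t ≠ 0) (ht : (t : ℤ) = 4 * (k + 24) - 37)
    (h1 : TStmt (k + 24 + 24) 96 ![t, t, 0]) (h2 : TStmt (k + 24) t ![b, 0, 0]) :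
    TStmt (k + 24 + 24) (96 + t) ![t + b, 0, 0] := by
  obtain ⟨ℓ, m, u, u', p, q, hu, hp, hr1⟩ := T2_elim k 96 t t ht0 ht0 h1
  obtain ⟨x, y, w, w', hw, hr2⟩ := T1_elim k t b hb h2
  rw [saturation k t ht, min_self] at hr1
  have hk : 24 ≤ k + 24 := by omega
  -- the moving points in `U_2`
  let px : ℂ → Fin t → Fin (k + 24 + 1) → ℂ :=
    fun z j => (p j ∘ emb (k + 24)) + z • (x j - (p j ∘ emb (k + 24)))
  let qy : ℂ → Fin t → Fin (k + 24 + 1) → ℂ :=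
    fun z j => (q j ∘ emb (k + 24)) + z • (y j - (q j ∘ emb (k + 24)))
  let F1 : ℂ → Submodule ℂ (MvPolynomial (Fin (k + 24 + 24 + 1)) ℂ) := fun z =>
    W2 ℓ m u u' (fun j => ext0 (px z j)) (fun j => ext0 (qy z j))
  let F2 : ℂ → Submodule ℂ (MvPolynomial (Fin (k + 24 + 1)) ℂ) := fun z =>
    W1 (px z) (qy z) w w'
  have P1 : PolyFam F1 := by
    refine PolyFam.sup (PolyFam.sup (PolyFam.const _) (PolyFam.sup (PolyFam.const _)
      (PolyFam.iSup fun j => ?_))) (PolyFam.const _)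
    simp only [px, qy, ext0_line]
    exact PolyFam.tanCone_line _ _ _ _
  have P2 : PolyFam F2 := by
    refine PolyFam.sup (PolyFam.const _) (PolyFam.iSup fun j => ?_)
    exact PolyFam.tanCone_line _ _ _ _
  have A1 := A3_fin (k + 24 + 24)
  have A2 := A3_fin (k + 24)
  have D1 : ∀ z, FiniteDimensional ℂ (F1 z) := fun z =>
    Submodule.finiteDimensional_of_le (W2_le_A3 _ _ _ _ _ _)
  have D2 : ∀ z, FiniteDimensional ℂ (F2 z) := fun z =>
    Submodule.finiteDimensional_of_le (W1_le_A3 _ _ _ _)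
  have E1 : F1 0 = W2 ℓ m u u' p q := by
    simp only [F1, px, qy, zero_smul, add_zero]
    congr 1
    · funext j; exact ext0_restrict hk _ (hp j).1
    · funext j; exact ext0_restrict hk _ (hp j).2
  have E2 : F2 1 = W1 x y w w' := by
    simp [F2, px, qy]
  obtain ⟨z, hz⟩ := ((P1.semicont D1 0).union (P2.semicont D2 1)).infinite_compl.nonempty
  have hz1 : Module.finrank ℂ (F1 0) ≤ Module.finrank ℂ (F1 z) :=
    not_lt.1 fun h => hz (Or.inl h)
  have hz2 : Module.finrank ℂ (F2 1) ≤ Module.finrank ℂ (F2 z) :=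
    not_lt.1 fun h => hz (Or.inr h)
  rw [E1] at hz1
  rw [E2] at hz2
  have hmem : ∀ j, memU 0 (Fin.append u (fun j => ext0 (w j)) j) ∧
      memU 0 (Fin.append u' (fun j => ext0 (w' j)) j) := by
    intro j
    refine Fin.addCases (fun i => ?_) (fun i => ?_) j
    · simpa only [Fin.append_left] using hu i
    · simpa only [Fin.append_right] using
        ⟨memU0_ext0 (w i) (hw i).1, memU0_ext0 (w' i) (hw i).2⟩
  refine T1_intro (k + 24) (96 + t) (t + b) (by omega)
    (Fin.append ℓ fun j => ext0 (px z j)) (Fin.append m fun j => ext0 (qy z j))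
    (Fin.append u fun j => ext0 (w j)) (Fin.append u' fun j => ext0 (w' j)) hmem ?_
  set V := W1 (Fin.append ℓ fun j => ext0 (px z j)) (Fin.append m fun j => ext0 (qy z j))
    (Fin.append u fun j => ext0 (w j)) (Fin.append u' fun j => ext0 (w' j)) with hV
  have V0 : S3U 0 ≤ V := le_sup_left.trans le_sup_left
  have Vl : ∀ j, tanCone 3 (Fin.append ℓ (fun j => ext0 (px z j)) j)
      (Fin.append m (fun j => ext0 (qy z j)) j) ≤ V := fun j =>
    (le_iSup (fun j => tanCone 3 (Fin.append ℓ (fun j => ext0 (px z j)) j)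
      (Fin.append m (fun j => ext0 (qy z j)) j)) j).trans le_sup_right
  have Vu : ∀ j, tanCone 3 (Fin.append u (fun j => ext0 (w j)) j)
      (Fin.append u' (fun j => ext0 (w' j)) j) ≤ V := fun j =>
    ((le_iSup (fun j => tanCone 3 (Fin.append u (fun j => ext0 (w j)) j)
      (Fin.append u' (fun j => ext0 (w' j)) j)) j).trans le_sup_right).trans le_sup_left
  have Va : ∀ j, tanCone 3 (ℓ j) (m j) ≤ V := fun j => by
    simpa only [Fin.append_left] using Vl (Fin.castAdd t j)
  have Vb : ∀ j, tanCone 3 (ext0 (px z j)) (ext0 (qy z j)) ≤ V := fun j => by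
    simpa only [Fin.append_right] using Vl (Fin.natAdd 96 j)
  have Vc : ∀ j, tanCone 3 (u j) (u' j) ≤ V := fun j => by
    simpa only [Fin.append_left] using Vu (Fin.castAdd b j)
  have Vd : ∀ j, tanCone 3 (ext0 (w j)) (ext0 (w' j)) ≤ V := fun j => by
    simpa only [Fin.append_right] using Vu (Fin.natAdd t j)
  have hF1 : F1 z ≤ V ⊔ S3U 1 := by
    refine sup_le (sup_le (sup_le ?_ ?_) (sup_le le_sup_right ?_)) ?_
    · exact V0.trans le_sup_left
    · exact iSup_le fun j => (Vc j).trans le_sup_left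
    · exact iSup_le fun j => (Vb j).trans le_sup_left
    · exact iSup_le fun j => (Va j).trans le_sup_left
  have hF2 : (F2 z).map (phi (k + 24)) ≤ V ⊓ S3U 1 := by
    refine le_inf ?_ ((Submodule.map_mono (W1_le_A3 _ _ _ _)).trans (phi_A3 hk))
    simp only [F2, W1, Submodule.map_sup, Submodule.map_iSup]
    refine sup_le (sup_le (phi_S3U.trans V0) ?_) ?_
    · exact iSup_le fun j => (phi_tanCone _ _).trans (Vd j)
    · exact iSup_le fun j => (phi_tanCone _ _).trans (Vb j)
  have DV : FiniteDimensional ℂ V := Submodule.finiteDimensional_of_le (W1_le_A3 _ _ _ _)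
  have DS : FiniteDimensional ℂ
      (S3U 1 : Submodule ℂ (MvPolynomial (Fin (k + 24 + 24 + 1)) ℂ)) := S3U_fin 1
  have c1 := Submodule.finrank_mono hF1
  have c2 := Submodule.finrank_mono hF2
  rw [← (Submodule.equivMapOfInjective _ (phi_inj (k + 24)) (F2 z)).finrank_eq] at c2
  have c3 := Submodule.finrank_sup_add_finrank_inf_eq V (S3U 1)
  have c4 := S3U1_finrank (k + 24) hk
  have c5 := saturation k t ht
  have hr1' : (k + 24 + 24 + 3).choose 3 ≤ Module.finrank ℂ (W2 ℓ m u u' p q) := by exact_mod_cast hr1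
  exact final_arith k t b _ _ _ _ _ _ _ _ _ _ _ c5 hr2 hr1' hz1 hz2 c1 c2 c3 c4

/-- Proposition 3.7 (ii): for `n ≥ 56`, truth of `T(n, 96; t(n−24), t(n−24), 0)` and of
`T(n−24, t(n−24); s_i(n−48), 0, 0)` implies truth of `T(n, t(n); s_i(n−24), 0, 0)`. -/
theorem induction_step_ii (si : ℕ → ℕ) (hsi : si = s1 ∨ si = s2) (n : ℕ) (hn : 56 ≤ n)
    (h1 : TStmt n 96 ![tfun (n - 24), tfun (n - 24), 0])
    (h2 : TStmt (n - 24) (tfun (n - 24)) ![si (n - 48), 0, 0]) :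
    TStmt n (tfun n) ![si (n - 24), 0, 0] := by
  obtain ⟨k, rfl⟩ : ∃ k, n = k + 24 + 24 := ⟨n - 48, by omega⟩
  have e1 : k + 24 + 24 - 24 = k + 24 := by omega
  have e2 : k + 24 + 24 - 48 = k := by omega
  rw [e1] at h1 h2 ⊢
  rw [e2] at h2
  have hstep : si (k + 24) = tfun (k + 24) + si k := by
    rcases hsi with rfl | rfl
    · exact s1_step k
    · simp only [s2, s1_step k]; omega
  have hpos : si k ≠ 0 := by
    rcases hsi with rfl | rfl
    · exact s1_pos k (by omega)
    · simp [s2]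
  have ht : tfun (k + 24 + 24) = 96 + tfun (k + 24) := by unfold tfun; omega
  rw [hstep, ht]
  exact main_step k _ _ hpos (by unfold tfun; omega) (by unfold tfun; omega) h1 h2
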